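/- Let b be a connected, canonically compactifiable graph over a finite discrete measure space (X,m), and let k ∈ ℓ²(X,m) with k(x) > 0 for all x ∈ X. Then for every f ∈ ℓ²(X,m) there exists a unique u ∈ D(L) such that Lu + k·u = f; that is, the operator u ↦ Lu + k·u with domain D(L) is a bijection from D(L) onto ℓ²(X,m). (Here k·u ∈ ℓ²(X,m) since u is bounded and k ∈ ℓ²(X,m).) -/

import Mathlib

open scoped BigOperators

/-- `u` is square-summable with respect to the measure `m`, i.e. `u ∈ ℓ²(X,m)`. -/
def MemL2 {X : Type*} (m : X → ℝ) (u : X → ℝ) : Prop :=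
  Summable (fun x => u x ^ 2 * m x)

/-- `u` has finite energy: the sum defining `Q̃(u)` converges. -/
def FinEnergy {X : Type*} (b : X → X → ℝ) (u : X → ℝ) : Prop :=
  Summable (fun p : X × X => b p.1 p.2 * (u p.1 - u p.2) ^ 2)

/-- The energy `Q(u) = (1/2) Σ_{x,y} b(x,y) (u(x) - u(y))²`. -/
noncomputable def energy {X : Type*} (b : X → X → ℝ) (u : X → ℝ) : ℝ :=
  (1 / 2) * ∑' p : X × X, b p.1 p.2 * (u p.1 - u p.2) ^ 2

/-- The bilinear energy form `Q(u,v) = (1/2) Σ_{x,y} b(x,y)(u(x)-u(y))(v(x)-v(y))`. -/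
noncomputable def energyBil {X : Type*} (b : X → X → ℝ) (u v : X → ℝ) : ℝ :=
  (1 / 2) * ∑' p : X × X, b p.1 p.2 * (u p.1 - u p.2) * (v p.1 - v p.2)

/-- The form domain `D(Q) = ℓ²(X,m) ∩ D̃`. -/
def MemDQ {X : Type*} (b : X → X → ℝ) (m : X → ℝ) (u : X → ℝ) : Prop :=
  MemL2 m u ∧ FinEnergy b u

/-- The form norm `‖u‖_Q = (Q(u) + ‖u‖₂²)^{1/2}`. -/
noncomputable def formNorm {X : Type*} (b : X → X → ℝ) (m : X → ℝ) (u : X → ℝ) : ℝ :=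
  Real.sqrt (energy b u + ∑' x, u x ^ 2 * m x)

/-- `b` is a graph over `X`: symmetric, nonnegative, zero on the diagonal,
with summable rows. -/
structure IsGraph {X : Type*} (b : X → X → ℝ) : Prop where
  symm : ∀ x y, b x y = b y x
  nonneg : ∀ x y, 0 ≤ b x y
  diag : ∀ x, b x x = 0
  row_summable : ∀ x, Summable (fun y => b x y)

/-- The graph `b` is connected: any two points are joined by a path of edges of
positive weight. -/
def GraphConnected {X : Type*} (b : X → X → ℝ) : Prop :=
  ∀ x y : X, Relation.ReflTransGen (fun a c => 0 < b a c) x y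

/-- `(X,m)` is a finite discrete measure space: `m > 0` everywhere and `m(X) < ∞`. -/
structure FinMeasure {X : Type*} (m : X → ℝ) : Prop where
  pos : ∀ x, 0 < m x
  summable : Summable m

/-- The graph `b` over `(X,m)` is canonically compactifiable: every function in
`D(Q)` is bounded. -/
def CanCompact {X : Type*} (b : X → X → ℝ) (m : X → ℝ) : Prop :=
  ∀ u : X → ℝ, MemDQ b m u → ∃ M : ℝ, ∀ x, |u x| ≤ M

/-- `u ∈ D(L)` with `L u = f` for the Neumann Laplacian `L`:
`u ∈ D(Q)`, `f ∈ ℓ²(X,m)` and `Q(u,v) = ⟨f,v⟩` for all `v ∈ D(Q)`. -/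
def IsLap {X : Type*} (b : X → X → ℝ) (m : X → ℝ) (u f : X → ℝ) : Prop :=
  MemDQ b m u ∧ MemL2 m f ∧
    ∀ v : X → ℝ, MemDQ b m v → energyBil b u v = ∑' x, f x * v x * m x

/-- The mean `ū = ⟨u,1⟩ / m(X)`. -/
noncomputable def mean {X : Type*} (m : X → ℝ) (u : X → ℝ) : ℝ :=
  (∑' x, u x * m x) / (∑' x, m x)

/-!
For every weight `c > 0`, the functions `u` of finite energy with `Σ c u² < ∞` form a Hilbert space
with inner product `Q(u,v) + Σ c u v`.

For `c = m`, canonical compactifiability and the uniform boundedness principle, applied to the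
point evaluations, give `‖u‖_∞ ≤ C ‖u‖_Q`. Every function `u` of finite energy is then bounded:
pick a finite set outside of which `m` has mass at most `1 / (2C²)`, and a level `a` that `|u|` does
not exceed on it. If `|u x| = a + t` with `t > 0`, the part `v` of `|u|` between the heights `a` and
`a + t` satisfies `t² = v(x)² ≤ C² (Q(v) + ‖v‖₂²) ≤ C² Q(u) + t² / 2`, which bounds `t`
independently of `x`.

For `c = k m`, this boundedness identifies the Hilbert space with `D(Q)` over `m` as a set, and
Riesz representation yields `u` with `Q(u,v) + ⟨k u,v⟩ = ⟨f,v⟩` for all `v`. Uniqueness holds since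
`L w + k w = 0` forces `Q(w) + Σ k w² m = 0`.
-/

open Filter Topology

section WeightedSquareSummable

variable {X : Type*} {m u v : X → ℝ}

lemma MemL2.of_abs_le (hm : ∀ x, 0 ≤ m x) (hv : MemL2 m v) (h : ∀ x, |u x| ≤ |v x|) :
    MemL2 m u :=
  hv.of_nonneg_of_le (fun x => mul_nonneg (sq_nonneg _) (hm x))
    fun x => mul_le_mul_of_nonneg_right (sq_le_sq.mpr (h x)) (hm x)

lemma MemL2.summable_mul (hm : ∀ x, 0 ≤ m x) (hu : MemL2 m u) (hv : MemL2 m v) :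
    Summable fun x => u x * v x * m x := by
  refine .of_norm_bounded (hu.add hv) fun x => ?_
  rw [Real.norm_eq_abs, abs_mul, abs_of_nonneg (hm x), ← add_mul]
  refine mul_le_mul_of_nonneg_right ?_ (hm x)
  rw [abs_mul, ← sq_abs (u x), ← sq_abs (v x)]
  linarith [two_mul_le_add_sq |u x| |v x|, mul_nonneg (abs_nonneg (u x)) (abs_nonneg (v x))]

lemma MemL2.sub (hm : ∀ x, 0 ≤ m x) (hu : MemL2 m u) (hv : MemL2 m v) :
    MemL2 m fun x => u x - v x :=
  ((Summable.add hu hv).sub ((hu.summable_mul hm hv).mul_left 2)).congr fun x => by ring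

lemma MemL2.mul_of_abs_le (hm : ∀ x, 0 ≤ m x) (hu : MemL2 m u) {M : ℝ} (hv : ∀ x, |v x| ≤ M) :
    MemL2 m fun x => u x * v x := by
  have hMu : MemL2 m fun x => M * u x := (hu.mul_left (M ^ 2)).congr fun x => by ring
  refine hMu.of_abs_le hm fun x => ?_
  rw [mul_comm, abs_mul, abs_mul]
  exact mul_le_mul_of_nonneg_right ((hv x).trans (le_abs_self M)) (abs_nonneg _)

lemma FinMeasure.countable (hm : FinMeasure m) : Countable X := by
  have hsupp : Function.support m = Set.univ := Set.eq_univ_of_forall fun x => (hm.pos x).ne'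
  exact Set.countable_univ_iff.mp (hsupp ▸ hm.summable.countable_support)

lemma FinMeasure.memL2_of_abs_le (hm : FinMeasure m) {M : ℝ} (hu : ∀ x, |u x| ≤ M) :
    MemL2 m u := by
  have hone : MemL2 m fun _ => 1 := by simpa [MemL2] using hm.summable
  simpa using hone.mul_of_abs_le (fun x => (hm.pos x).le) hu

lemma FinMeasure.tsum_sq_mul_le (hm : FinMeasure m) {F : Finset X} {t : ℝ}
    (hF : ∀ x ∈ F, u x = 0) (hu : ∀ x, |u x| ≤ t) :
    ∑' x, u x ^ 2 * m x ≤ t ^ 2 * ∑' x : {x // x ∉ F}, m x := by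
  have hsupp : Function.support (fun x => u x ^ 2 * m x) ⊆ {x | x ∉ F} := fun x hx hxF =>
    hx (by simp [hF x hxF])
  rw [← tsum_subtype_eq_of_support_subset hsupp, ← tsum_mul_left]
  refine ((hm.memL2_of_abs_le hu).subtype _).tsum_le_tsum (fun x => ?_)
    ((hm.summable.subtype _).mul_left _)
  exact mul_le_mul_of_nonneg_right (sq_le_sq.mpr ((hu x).trans (le_abs_self t))) (hm.pos x).le

end WeightedSquareSummable

section Energy

variable {X : Type*} {b : X → X → ℝ} {m u v w : X → ℝ}

lemma finEnergy_iff_memL2 :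
    FinEnergy b u ↔ MemL2 (fun p : X × X => b p.1 p.2) fun p => u p.1 - u p.2 :=
  summable_congr fun _ => mul_comm _ _

lemma FinEnergy.of_abs_sub_le (hb : ∀ x y, 0 ≤ b x y) (hu : FinEnergy b u)
    (h : ∀ x y, |v x - v y| ≤ |u x - u y|) : FinEnergy b v :=
  finEnergy_iff_memL2.mpr <|
    (finEnergy_iff_memL2.mp hu).of_abs_le (fun _ => hb _ _) fun _ => h _ _

lemma FinEnergy.summable_mul (hb : ∀ x y, 0 ≤ b x y) (hu : FinEnergy b u) (hv : FinEnergy b v) :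
    Summable fun p : X × X => b p.1 p.2 * (u p.1 - u p.2) * (v p.1 - v p.2) :=
  ((finEnergy_iff_memL2.mp hu).summable_mul (fun _ => hb _ _)
    (finEnergy_iff_memL2.mp hv)).congr fun p => by ring

lemma FinEnergy.sub (hb : ∀ x y, 0 ≤ b x y) (hu : FinEnergy b u) (hv : FinEnergy b v) :
    FinEnergy b fun x => u x - v x :=
  ((Summable.add hu hv).sub ((hu.summable_mul hb hv).mul_left 2)).congr fun p => by ring

lemma MemDQ.sub (hb : ∀ x y, 0 ≤ b x y) (hm : ∀ x, 0 ≤ m x) (hu : MemDQ b m u)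
    (hv : MemDQ b m v) : MemDQ b m fun x => u x - v x :=
  ⟨hu.1.sub hm hv.1, hu.2.sub hb hv.2⟩

lemma energy_nonneg (hb : ∀ x y, 0 ≤ b x y) (u : X → ℝ) : 0 ≤ energy b u :=
  mul_nonneg (by norm_num) (tsum_nonneg fun _ => mul_nonneg (hb _ _) (sq_nonneg _))

lemma energy_le_of_abs_sub_le (hb : ∀ x y, 0 ≤ b x y) (hu : FinEnergy b u)
    (h : ∀ x y, |v x - v y| ≤ |u x - u y|) : energy b v ≤ energy b u :=
  mul_le_mul_of_nonneg_left ((hu.of_abs_sub_le hb h).tsum_le_tsum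
    (fun _ => mul_le_mul_of_nonneg_left (sq_le_sq.mpr (h _ _)) (hb _ _)) hu) (by norm_num)

lemma energyBil_self (b : X → X → ℝ) (u : X → ℝ) : energyBil b u u = energy b u := by
  simp only [energyBil, energy, mul_assoc, sq]

lemma energyBil_sub_left (hb : ∀ x y, 0 ≤ b x y) (hu : FinEnergy b u) (hv : FinEnergy b v)
    (hw : FinEnergy b w) :
    energyBil b (fun x => u x - v x) w = energyBil b u w - energyBil b v w := by
  rw [energyBil, energyBil, energyBil, ← mul_sub,
    ← (hu.summable_mul hb hw).tsum_sub (hv.summable_mul hb hw)]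
  exact congrArg _ (tsum_congr fun p => by ring)

lemma formNorm_sq (hb : ∀ x y, 0 ≤ b x y) (hm : ∀ x, 0 ≤ m x) (u : X → ℝ) :
    formNorm b m u ^ 2 = energy b u + ∑' x, u x ^ 2 * m x :=
  Real.sq_sqrt (add_nonneg (energy_nonneg hb u)
    (tsum_nonneg fun x => mul_nonneg (sq_nonneg _) (hm x)))

end Energy

section FormSpace

variable {X : Type*} {b : X → X → ℝ} {c : X → ℝ}

/-- The value `u x` recovered from the coordinate `√(c x) * u x` of a sequence in
`ℓ²((X × X) ⊕ X)`; it is the point evaluation on `formSpace b c`. -/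
noncomputable def formEval (c : X → ℝ) (x : X) :
    lp (fun _ : (X × X) ⊕ X => ℝ) 2 →L[ℝ] ℝ :=
  (√(c x))⁻¹ • lp.evalCLM ℝ (fun _ : (X × X) ⊕ X => ℝ) 2 (Sum.inr x)

/-- The form domain `D(Q)` over `(X, c)` as a Hilbert space with inner product
`Q(u,v) + Σ c u v`, where `c > 0`. A function `u` is encoded as the sequence with entries
`√(b x y / 2) * (u x - u y)` at `(x, y)` and `√(c x) * u x` at `x`. -/
noncomputable def formSpace (b : X → X → ℝ) (c : X → ℝ) :
    Submodule ℝ (lp (fun _ : (X × X) ⊕ X => ℝ) 2) :=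
  ⨅ p : X × X, (lp.evalCLM ℝ (fun _ : (X × X) ⊕ X => ℝ) 2 (Sum.inl p) -
    √(b p.1 p.2 / 2) • (formEval c p.1 - formEval c p.2)).ker

namespace formSpace

lemma mem_iff {w : lp (fun _ : (X × X) ⊕ X => ℝ) 2} :
    w ∈ formSpace b c ↔
      ∀ p : X × X, w (Sum.inl p) = √(b p.1 p.2 / 2) * (formEval c p.1 w - formEval c p.2 w) := by
  simp only [formSpace, Submodule.mem_iInf]
  exact forall_congr' fun p => sub_eq_zero

instance : CompleteSpace (formSpace b c) := by
  have hclosed : IsClosed (formSpace b c : Set (lp (fun _ : (X × X) ⊕ X => ℝ) 2)) := by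
    rw [formSpace, Submodule.coe_iInf]
    exact isClosed_iInter fun p => ContinuousLinearMap.isClosed_ker _
  exact hclosed.completeSpace_coe

lemma coe_inr (hc : ∀ x, 0 < c x) (w : lp (fun _ : (X × X) ⊕ X => ℝ) 2) (x : X) :
    w (Sum.inr x) = √(c x) * formEval c x w :=
  (mul_inv_cancel_left₀ (Real.sqrt_pos.mpr (hc x)).ne' _).symm

lemma coe_inl_mul_coe_inl (hb : ∀ x y, 0 ≤ b x y) (w z : formSpace b c) (p : X × X) :
    w.1 (Sum.inl p) * z.1 (Sum.inl p) = 1 / 2 * (b p.1 p.2 *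
      (formEval c p.1 w.1 - formEval c p.2 w.1) * (formEval c p.1 z.1 - formEval c p.2 z.1)) := by
  rw [mem_iff.mp w.2, mem_iff.mp z.2, mul_mul_mul_comm,
    Real.mul_self_sqrt (div_nonneg (hb _ _) zero_le_two)]
  ring

lemma coe_inr_mul_coe_inr (hc : ∀ x, 0 < c x) (w z : formSpace b c) (x : X) :
    w.1 (Sum.inr x) * z.1 (Sum.inr x) = formEval c x w.1 * formEval c x z.1 * c x := by
  rw [coe_inr hc, coe_inr hc, mul_mul_mul_comm, Real.mul_self_sqrt (hc x).le, mul_comm]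

lemma hasSum_mul_inner (w z : formSpace b c) :
    HasSum (fun i => w.1 i * z.1 i) (inner ℝ w z) := by
  simpa [mul_comm] using lp.hasSum_inner (𝕜 := ℝ) w.1 z.1

lemma memDQ_formEval (hb : ∀ x y, 0 ≤ b x y) (hc : ∀ x, 0 < c x) (w : formSpace b c) :
    MemDQ b c fun x => formEval c x w.1 := by
  have hsum := (hasSum_mul_inner w w).summable
  constructor
  · refine (hsum.comp_injective Sum.inr_injective).congr fun x => ?_
    rw [Function.comp_apply, coe_inr_mul_coe_inr hc, sq]
  · refine ((hsum.comp_injective Sum.inl_injective).mul_left 2).congr fun p => ?_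
    rw [Function.comp_apply, coe_inl_mul_coe_inl hb]
    ring

lemma inner_eq (hb : ∀ x y, 0 ≤ b x y) (hc : ∀ x, 0 < c x) (w z : formSpace b c) :
    inner ℝ w z = energyBil b (fun x => formEval c x w.1) (fun x => formEval c x z.1) +
      ∑' x, formEval c x w.1 * formEval c x z.1 * c x := by
  have hsum := hasSum_mul_inner w z
  have hinl := hsum.summable.comp_injective Sum.inl_injective
  have hinr := hsum.summable.comp_injective Sum.inr_injective
  rw [hsum.unique (hinl.hasSum.sum hinr.hasSum), energyBil, ← tsum_mul_left]
  exact congrArg₂ _ (tsum_congr fun p => coe_inl_mul_coe_inl hb w z p)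
    (tsum_congr fun x => coe_inr_mul_coe_inr hc w z x)

lemma norm_eq (hb : ∀ x y, 0 ≤ b x y) (hc : ∀ x, 0 < c x) (w : formSpace b c) :
    ‖w‖ = formNorm b c fun x => formEval c x w.1 := by
  rw [norm_eq_sqrt_real_inner, inner_eq hb hc, energyBil_self, formNorm]
  simp only [sq]

lemma exists_formEval_eq (hb : ∀ x y, 0 ≤ b x y) (hc : ∀ x, 0 < c x) {v : X → ℝ}
    (hv : MemDQ b c v) : ∃ w : formSpace b c, (fun x => formEval c x w.1) = v := by
  let coords : (X × X) ⊕ X → ℝ :=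
    Sum.elim (fun p => √(b p.1 p.2 / 2) * (v p.1 - v p.2)) fun x => √(c x) * v x
  have hsq : Summable fun i => coords i ^ 2 := by
    refine .sum _ ((hv.2.mul_left (1 / 2)).congr fun p => ?_) (hv.1.congr fun x => ?_)
    · simp only [coords, Function.comp_apply, Sum.elim_inl]
      rw [mul_pow, Real.sq_sqrt (div_nonneg (hb _ _) zero_le_two)]
      ring
    · simp only [coords, Function.comp_apply, Sum.elim_inr]
      rw [mul_pow, Real.sq_sqrt (hc x).le, mul_comm]
  have hcoords : Memℓp coords 2 := memℓp_gen (hsq.congr fun i => by simp)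
  have heval : ∀ x, formEval c x ⟨coords, hcoords⟩ = v x := fun x =>
    inv_mul_cancel_left₀ (Real.sqrt_pos.mpr (hc x)).ne' (v x)
  exact ⟨⟨⟨coords, hcoords⟩, mem_iff.mpr fun p => by rw [heval, heval]; rfl⟩, funext heval⟩

end formSpace

/-- The functional `v ↦ Σ g v` is continuous as a pointwise limit of continuous functionals on a
Hilbert space. -/
theorem exists_energyBil_add_tsum_eq [Countable X] (hb : ∀ x y, 0 ≤ b x y)
    (hc : ∀ x, 0 < c x) {g : X → ℝ} (hg : ∀ v, MemDQ b c v → Summable fun x => g x * v x) :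
    ∃ u, MemDQ b c u ∧ ∀ v, MemDQ b c v →
      energyBil b u v + ∑' x, u x * v x * c x = ∑' x, g x * v x := by
  let partialSum (F : Finset X) : formSpace b c →L[ℝ] ℝ :=
    ∑ x ∈ F, g x • (formEval c x).comp (formSpace b c).subtypeL
  have hlim : Tendsto (fun F w => partialSum F w) atTop
      (𝓝 fun w : formSpace b c => ∑' x, g x * formEval c x w.1) := by
    refine tendsto_pi_nhds.mpr fun w => ?_
    simpa [partialSum, HasSum] using (hg _ (formSpace.memDQ_formEval hb hc w)).hasSum
  let w := (InnerProductSpace.toDual ℝ (formSpace b c)).symm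
    (continuousLinearMapOfTendsto partialSum hlim)
  refine ⟨_, formSpace.memDQ_formEval hb hc w, fun v hv => ?_⟩
  obtain ⟨z, rfl⟩ := formSpace.exists_formEval_eq hb hc hv
  rw [← formSpace.inner_eq hb hc, InnerProductSpace.toDual_symm_apply]
  rfl

end FormSpace

section CanonicallyCompactifiable

variable {X : Type*} {b : X → X → ℝ} {m : X → ℝ}

theorem CanCompact.exists_abs_le_mul_formNorm (hcc : CanCompact b m) (hb : ∀ x y, 0 ≤ b x y)
    (hm : ∀ x, 0 < m x) : ∃ C, ∀ u, MemDQ b m u → ∀ x, |u x| ≤ C * formNorm b m u := by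
  obtain ⟨C, hC⟩ := banach_steinhaus
    (g := fun x => (formEval m x).comp (formSpace b m).subtypeL)
    fun w => hcc _ (formSpace.memDQ_formEval hb hm w)
  refine ⟨C, fun u hu x => ?_⟩
  obtain ⟨w, rfl⟩ := formSpace.exists_formEval_eq hb hm hu
  rw [← formSpace.norm_eq hb hm]
  exact ContinuousLinearMap.le_of_opNorm_le _ (hC x) w

/-- The part of `|u|` between the heights `a` and `a + t`: the test function that shows that
functions of finite energy are bounded. -/
noncomputable def heightSlice (u : X → ℝ) (a t : ℝ) (x : X) : ℝ :=
  max (min (|u x| - a) t) 0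

lemma abs_heightSlice_le (u : X → ℝ) (a : ℝ) {t : ℝ} (ht : 0 ≤ t) (x : X) :
    |heightSlice u a t x| ≤ t := by
  rw [heightSlice, abs_of_nonneg (le_max_right _ _)]
  exact max_le (min_le_right _ _) ht

lemma abs_heightSlice_sub_le (u : X → ℝ) (a t : ℝ) (x y : X) :
    |heightSlice u a t x - heightSlice u a t y| ≤ |u x - u y| :=
  calc |heightSlice u a t x - heightSlice u a t y|
      ≤ |min (|u x| - a) t - min (|u y| - a) t| := abs_max_sub_max_le_abs _ _ _
    _ ≤ |(|u x| - a) - (|u y| - a)| := by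
      simpa using abs_min_sub_min_le_max (|u x| - a) t (|u y| - a) t
    _ ≤ |u x - u y| := by
      rw [sub_sub_sub_cancel_right]
      exact abs_abs_sub_abs_le _ _

theorem CanCompact.bounded_of_finEnergy (hcc : CanCompact b m) (hb : ∀ x y, 0 ≤ b x y)
    (hm : FinMeasure m) {u : X → ℝ} (hu : FinEnergy b u) : ∃ M, ∀ x, |u x| ≤ M := by
  obtain ⟨C, hC⟩ := hcc.exists_abs_le_mul_formNorm hb hm.pos
  obtain ⟨F, hF⟩ : ∃ F : Finset X, C ^ 2 * ∑' x : {x // x ∉ F}, m x < 1 / 2 :=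
    (((tendsto_tsum_compl_atTop_zero m).const_mul (C ^ 2)).eventually
      (gt_mem_nhds (by norm_num))).exists
  obtain ⟨a, ha⟩ : ∃ a, ∀ x ∈ F, |u x| ≤ a :=
    ⟨∑ x ∈ F, |u x|, fun x hx => Finset.single_le_sum (fun y _ => abs_nonneg (u y)) hx⟩
  refine ⟨a + √(2 * (C ^ 2 * energy b u)), fun x => ?_⟩
  rcases le_total |u x| a with hxa | hxa
  · exact hxa.trans (le_add_of_nonneg_right (Real.sqrt_nonneg _))
  rw [← sub_le_iff_le_add']
  refine Real.le_sqrt_of_sq_le ?_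
  set t := |u x| - a with ht
  have ht0 : 0 ≤ t := sub_nonneg.mpr hxa
  set v := heightSlice u a t
  have hvx : v x = t := by simp [v, heightSlice, ← ht, ht0]
  have hvF : ∀ y ∈ F, v y = 0 := fun y hy =>
    max_eq_right ((min_le_left _ _).trans (sub_nonpos.mpr (ha y hy)))
  have hvt := abs_heightSlice_le u a ht0
  have hvu := abs_heightSlice_sub_le u a t
  have hv : MemDQ b m v := ⟨hm.memL2_of_abs_le hvt, hu.of_abs_sub_le hb hvu⟩
  have hsq : t ^ 2 ≤ C ^ 2 * (energy b u + t ^ 2 * ∑' y : {y // y ∉ F}, m y) :=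
    calc t ^ 2 = |v x| ^ 2 := by rw [hvx, sq_abs]
      _ ≤ (C * formNorm b m v) ^ 2 := pow_le_pow_left₀ (abs_nonneg _) (hC v hv x) 2
      _ = C ^ 2 * (energy b v + ∑' y, v y ^ 2 * m y) := by
        rw [mul_pow, formNorm_sq hb fun y => (hm.pos y).le]
      _ ≤ _ := mul_le_mul_of_nonneg_left (add_le_add (energy_le_of_abs_sub_le hb hu hvu)
        (hm.tsum_sq_mul_le hvF hvt)) (sq_nonneg C)
  linarith [mul_le_mul_of_nonneg_left hF.le (sq_nonneg t)]

end CanonicallyCompactifiable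

section Laplacian

variable {X : Type*} {b : X → X → ℝ} {m k u v f g : X → ℝ}

lemma IsLap.sub (hb : ∀ x y, 0 ≤ b x y) (hm : ∀ x, 0 ≤ m x) (hu : IsLap b m u f)
    (hv : IsLap b m v g) : IsLap b m (fun x => u x - v x) fun x => f x - g x := by
  refine ⟨hu.1.sub hb hm hv.1, hu.2.1.sub hm hv.2.1, fun w hw => ?_⟩
  rw [energyBil_sub_left hb hu.1.2 hv.1.2 hw.2, hu.2.2 w hw, hv.2.2 w hw,
    ← (hu.2.1.summable_mul hm hw.1).tsum_sub (hv.2.1.summable_mul hm hw.1)]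
  exact tsum_congr fun x => by ring

lemma IsLap.eq_zero_of_neg_mul (hb : ∀ x y, 0 ≤ b x y) (hm : ∀ x, 0 < m x) (hk : ∀ x, 0 < k x)
    (hu : IsLap b m u fun x => -(k x * u x)) : u = 0 := by
  have hsum : Summable fun x => -(k x * u x) * u x * m x :=
    hu.2.1.summable_mul (fun x => (hm x).le) hu.1.1
  have hterm : ∀ x, -(k x * u x) * u x * m x = -(k x * m x * u x ^ 2) := fun x => by ring
  have henergy : energy b u = -∑' x, k x * m x * u x ^ 2 := by
    rw [← energyBil_self, hu.2.2 u hu.1, ← tsum_neg]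
    exact tsum_congr hterm
  simp only [hterm, summable_neg_iff] at hsum
  have hnonneg : ∀ x, 0 ≤ k x * m x * u x ^ 2 := fun x =>
    mul_nonneg (mul_pos (hk x) (hm x)).le (sq_nonneg _)
  funext x
  have hx : k x * m x * u x ^ 2 ≤ 0 := by
    linarith [hsum.le_tsum x fun y _ => hnonneg y, energy_nonneg hb u]
  exact pow_eq_zero_iff two_ne_zero |>.mp <|
    le_antisymm (nonpos_of_mul_nonpos_right hx (mul_pos (hk x) (hm x))) (sq_nonneg _)

lemma IsLap.eq_of_sub_mul (hb : ∀ x y, 0 ≤ b x y) (hm : ∀ x, 0 < m x) (hk : ∀ x, 0 < k x)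
    (hu : IsLap b m u fun x => f x - k x * u x) (hv : IsLap b m v fun x => f x - k x * v x) :
    u = v := by
  have hdiff : IsLap b m (fun x => u x - v x) fun x => -(k x * (u x - v x)) := by
    convert hu.sub hb (fun x => (hm x).le) hv using 2
    ring
  funext x
  exact sub_eq_zero.mp (congrFun (hdiff.eq_zero_of_neg_mul hb hm hk) x)

theorem CanCompact.exists_isLap_sub_mul (hcc : CanCompact b m) (hb : ∀ x y, 0 ≤ b x y)
    (hm : FinMeasure m) (hk2 : MemL2 m k) (hk : ∀ x, 0 < k x) (hf : MemL2 m f) :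
    ∃ u, IsLap b m u fun x => f x - k x * u x := by
  have := hm.countable
  have hm0 : ∀ x, 0 ≤ m x := fun x => (hm.pos x).le
  have memL2 {v : X → ℝ} (hv : FinEnergy b v) : MemL2 m v :=
    (hcc.bounded_of_finEnergy hb hm hv).elim fun _ => hm.memL2_of_abs_le
  have memL2_mul {v : X → ℝ} (hv : FinEnergy b v) : MemL2 m fun x => k x * v x :=
    (hcc.bounded_of_finEnergy hb hm hv).elim fun _ => hk2.mul_of_abs_le hm0
  have hfmul {v : X → ℝ} (hv : FinEnergy b v) : Summable fun x => f x * v x * m x :=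
    hf.summable_mul hm0 (memL2 hv)
  have hkmul {v w : X → ℝ} (hv : FinEnergy b v) (hw : FinEnergy b w) :
      Summable fun x => k x * v x * w x * m x :=
    (memL2_mul hv).summable_mul hm0 (memL2 hw)
  obtain ⟨u, hu, hrepr⟩ := exists_energyBil_add_tsum_eq (c := fun x => k x * m x)
    (g := fun x => f x * m x) hb (fun x => mul_pos (hk x) (hm.pos x))
    fun v hv => (hfmul hv.2).congr fun x => by ring
  refine ⟨u, ⟨memL2 hu.2, hu.2⟩, hf.sub hm0 (memL2_mul hu.2), fun v hv => ?_⟩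
  have hvk : MemDQ b (fun x => k x * m x) v :=
    ⟨(hkmul hv.2 hv.2).congr fun x => by ring, hv.2⟩
  calc energyBil b u v
      = ∑' x, f x * m x * v x - ∑' x, u x * v x * (k x * m x) :=
        eq_sub_of_add_eq (hrepr v hvk)
    _ = ∑' x, f x * v x * m x - ∑' x, k x * u x * v x * m x :=
        congrArg₂ _ (tsum_congr fun x => by ring) (tsum_congr fun x => by ring)
    _ = ∑' x, (f x - k x * u x) * v x * m x := by
        rw [← (hfmul hv.2).tsum_sub (hkmul hu.2 hv.2)]
        exact tsum_congr fun x => by ring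

end Laplacian

theorem stmt11_general {X : Type*} (b : X → X → ℝ) (m : X → ℝ) (hb : ∀ x y, 0 ≤ b x y)
    (hm : FinMeasure m) (hcc : CanCompact b m) (k : X → ℝ) (hk2 : MemL2 m k)
    (hkpos : ∀ x, 0 < k x) :
    ∀ f : X → ℝ, MemL2 m f →
      ∃! u : X → ℝ, IsLap b m u (fun x => f x - k x * u x) := fun _ hf =>
  existsUnique_of_exists_of_unique (hcc.exists_isLap_sub_mul hb hm hk2 hkpos hf)
    fun _ _ hu hv => hu.eq_of_sub_mul hb hm.pos hkpos hv

/-- for `k ∈ ℓ²(X,m)` with `k > 0`, the operator `L + k` with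
domain `D(L)` is a bijection onto `ℓ²(X,m)`: for each `f ∈ ℓ²(X,m)` there is a
unique `u ∈ D(L)` with `Lu + k·u = f`, i.e. `Lu = f - k·u`. -/
theorem stmt11 {X : Type*} [Countable X] (b : X → X → ℝ) (m : X → ℝ)
    (hb : IsGraph b) (hconn : GraphConnected b) (hm : FinMeasure m)
    (hcc : CanCompact b m) (k : X → ℝ) (hk2 : MemL2 m k) (hkpos : ∀ x, 0 < k x) :
    ∀ f : X → ℝ, MemL2 m f →
      ∃! u : X → ℝ, IsLap b m u (fun x => f x - k x * u x) :=
  stmt11_general b m hb.nonneg hm hcc k hk2 hkpos
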